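/- Let F be a field, let a ≥ 2 be an integer, b = 1, and let t₁, t₂ ∈ F be distinct nonzero elements. Set e₁ = t₁ + t₂ and e₂ = t₁t₂. Then in the polynomial ring P = F[x₀,…,x_a, y₀, y₁] one has the ideal equality I₂(MX) + J_e = I₂(m₁) ∩ I₂(m₂), where J_e is the ideal generated by the cubic forms Q_{i,0} := x_{i+2}y₀² − e₁ x_{i+1}y₀y₁ + e₂ x_i y₁² for 0 ≤ i ≤ a−2, and for ℓ = 1, 2, m_ℓ is the 2×(a+1) matrix with rows (x₀,…,x_{a−1}, y₀) and (x₁,…,x_a, t_ℓ y₁). -/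

import Mathlib

open MvPolynomial

noncomputable section

/-- The polynomial ring `F[x₀,…,x_a, y₀, y₁]` (the case `b = 1`). -/
abbrev KPoly (F : Type*) [CommRing F] (a : ℕ) : Type _ :=
  MvPolynomial (Fin (a + 1) ⊕ Fin 2) F

variable (F : Type*) [CommRing F] (a : ℕ)

/-- The variable `x_i`. -/
def xv (i : Fin (a + 1)) : KPoly F a := X (Sum.inl i)

/-- The variable `y_j` for `j = 0, 1`. -/
def yv (j : Fin 2) : KPoly F a := X (Sum.inr j)

/-- The ideal generated by the 2×2 minors of the matrix `MX` with rows
`(x₀,…,x_{a−1})` and `(x₁,…,x_a)`. -/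
def I2MX : Ideal (KPoly F a) :=
  Ideal.span { f | ∃ c c' : Fin a,
    f = xv F a c.castSucc * xv F a c'.succ - xv F a c'.castSucc * xv F a c.succ }

/-- The first row `(x₀,…,x_{a−1}, y₀)` of the matrix `m_ℓ`. -/
def mrow1 : Fin a ⊕ Fin 1 → KPoly F a
  | Sum.inl c => xv F a c.castSucc
  | Sum.inr _ => yv F a 0

/-- The second row `(x₁,…,x_a, t·y₁)` of the matrix `m_ℓ`. -/
def mrow2 (t : F) : Fin a ⊕ Fin 1 → KPoly F a
  | Sum.inl c => xv F a c.succ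
  | Sum.inr _ => C t * yv F a 1

/-- The ideal generated by the 2×2 minors of the `2×(a+1)` matrix `m_ℓ`
with rows `(x₀,…,x_{a−1}, y₀)` and `(x₁,…,x_a, t·y₁)`. -/
def I2M (t : F) : Ideal (KPoly F a) :=
  Ideal.span { f | ∃ c c' : Fin a ⊕ Fin 1,
    f = mrow1 F a c * mrow2 F a t c' - mrow1 F a c' * mrow2 F a t c }

/-- The ideal `J_e` generated by the cubic forms
`Q_{i,0} = x_{i+2}y₀² − e₁x_{i+1}y₀y₁ + e₂x_iy₁²` for `0 ≤ i ≤ a−2`. -/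
def Je (e1 e2 : F) : Ideal (KPoly F a) :=
  Ideal.span { f | ∃ i : ℕ, ∃ _ : i + 2 ≤ a,
    f = xv F a ⟨i + 2, by omega⟩ * yv F a 0 ^ 2
      - C e1 * (xv F a ⟨i + 1, by omega⟩ * (yv F a 0 * yv F a 1))
      + C e2 * (xv F a ⟨i, by omega⟩ * yv F a 1 ^ 2) }

/-!
The substitution `x_i ↦ s^(a-i) u^i` embeds `P / I₂(MX)` into `F[s, u, y₀, y₁]`, with image spanned
by the monomials whose degree in `s, u` is a multiple of `a`; forgetting all other monomials is a
`P`-linear retraction of this embedding. The ideal `I₂(m_ℓ)` maps into the principal ideal of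
`L_ℓ = t_ℓ s y₁ - u y₀`. If `L₂` divides `L₁ g`, then it divides `(L₁ - L₂) g = (t₁ - t₂) s y₁ g`;
as `t₁ - t₂`, `s` and `y₁` can be cancelled modulo `L₂`, it divides `g`. Hence an element of the
intersection maps to some `k L₁ L₂`. Since `s^(a-2-i) u^i L₁ L₂` is the image of `Q_{i,0}`, the
retraction sends `k L₁ L₂` into `J_e` modulo `I₂(MX)`.
-/

section RationalNormalCurve

variable {M : Type*} [CommMonoid M] {a}

/-- The vanishing of the 2×2 minors of the matrix with rows `(x₀,…,x_{a−1})` and `(x₁,…,x_a)`,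
written multiplicatively. -/
def HasVanishingMinors (x : Fin (a + 1) → M) : Prop :=
  ∀ i j : Fin a, x i.castSucc * x j.succ = x j.castSucc * x i.succ

/-- The product of `k` terms of `x₀,…,x_a` with index sum `q`, taking the largest possible index
first; for `q ≤ a * k` it serves as the normal form of all such products. -/
def greedyProduct (x : Fin (a + 1) → M) : ℕ → ℕ → M
  | 0, _ => 1
  | k + 1, q => x ⟨min a q, by omega⟩ * greedyProduct x k (q - min a q)

namespace HasVanishingMinors

variable {x : Fin (a + 1) → M}

theorem mul_eq_mul_of_add_eq_add (hx : HasVanishingMinors x) {i j k l : Fin (a + 1)}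
    (h : (i : ℕ) + j = k + l) : x i * x j = x k * x l := by
  wlog hik : i ≤ k generalizing i j k l
  · exact (this h.symm (le_of_not_ge hik)).symm
  induction hd : (k : ℕ) - i generalizing i j with
  | zero =>
    obtain rfl : i = k := by omega
    obtain rfl : j = l := by omega
    rfl
  | succ d ih =>
    obtain ⟨i, rfl⟩ := Fin.exists_castSucc_eq.2 (show i ≠ Fin.last a by grind)
    obtain ⟨j, rfl⟩ := Fin.exists_succ_eq.2 (show j ≠ 0 by grind)
    rw [hx, mul_comm]
    exact ih (by grind) (by grind) (by grind)

theorem greedyProduct_mul (hx : HasVanishingMinors x) {k q : ℕ} (hq : q ≤ a * k)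
    (i : Fin (a + 1)) : greedyProduct x k q * x i = greedyProduct x (k + 1) (q + i) := by
  induction k generalizing q i with
  | zero =>
    obtain rfl : q = 0 := by simpa using hq
    simp [greedyProduct, Nat.min_eq_right i.is_le]
  | succ k ih =>
    let m : Fin (a + 1) := ⟨min a q, by omega⟩
    let m' : Fin (a + 1) := ⟨min a (q + i), by omega⟩
    let i' : Fin (a + 1) := ⟨i + min a q - min a (q + i), by omega⟩
    have hq' : q - m ≤ a * k := by
      rw [mul_add_one] at hq
      grind
    have hswap : x m * x i = x m' * x i' := hx.mul_eq_mul_of_add_eq_add (by grind)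
    have hrest : q - m + i' = q + i - m' := by grind
    calc x m * greedyProduct x k (q - m) * x i
        = x m' * (greedyProduct x k (q - m) * x i') := by
          rw [mul_right_comm, hswap, mul_assoc, mul_comm (x i')]
      _ = x m' * greedyProduct x (k + 1) (q + i - m') := by rw [ih hq' i', hrest]

end HasVanishingMinors

end RationalNormalCurve

section LinearMap

variable {R A B σ : Type*} [CommSemiring R] [Semiring A] [Algebra R A] [Semiring B] [Algebra R B]

theorem map_mul_monomial_one_of_forall_add (ψ : MvPolynomial σ R →ₗ[R] A) (e : σ →₀ ℕ) (z : A)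
    (h : ∀ d, ψ (monomial (d + e) 1) = ψ (monomial d 1) * z) (p : MvPolynomial σ R) :
    ψ (p * monomial e 1) = ψ p * z := by
  induction p using MvPolynomial.induction_on' with
  | monomial d c =>
    have hsmul (d' : σ →₀ ℕ) : ψ (monomial d' c) = c • ψ (monomial d' 1) := by
      rw [← map_smul, smul_monomial, smul_eq_mul, mul_one]
    rw [monomial_mul, mul_one, hsmul, hsmul, h, smul_mul_assoc]
  | add p q hp hq => rw [add_mul, map_add, map_add, hp, hq, add_mul]

theorem map_mul_algHom_of_forall_X (φ : MvPolynomial σ R →ₐ[R] B) (π : MvPolynomial σ R →ₐ[R] A)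
    (ψ : B →ₗ[R] A) (h : ∀ n g, ψ (g * φ (X n)) = ψ g * π (X n)) (g : B)
    (f : MvPolynomial σ R) : ψ (g * φ f) = ψ g * π f := by
  induction f using MvPolynomial.induction_on generalizing g with
  | C c =>
    rw [algHom_C, algHom_C, Algebra.algebraMap_eq_smul_one, Algebra.algebraMap_eq_smul_one,
      mul_smul_one, mul_smul_one, map_smul]
  | add p q hp hq => rw [map_add, mul_add, map_add, hp, hq, map_add, mul_add]
  | mul_X p n hp => rw [map_mul φ, ← mul_assoc, h, hp, map_mul π, mul_assoc]

end LinearMap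

section Retraction

/-- The polynomial ring `F[s, u, y₀, y₁]`, with `s = X (.inl 0)`, `u = X (.inl 1)` and
`y_j = X (.inr j)`. -/
abbrev ParamPoly (F : Type*) [CommRing F] : Type _ := MvPolynomial (Fin 2 ⊕ Fin 2) F

/-- The parametrization `x_i ↦ s^(a-i) u^i`, `y_j ↦ y_j` of the cone over the rational normal
curve. -/
def param : KPoly F a →ₐ[F] ParamPoly F :=
  aeval (Sum.elim (fun i => X (.inl 0) ^ (a - (i : ℕ)) * X (.inl 1) ^ (i : ℕ))
    fun j => X (.inr j))

/-- The weight on the variables of `F[s, u, y₀, y₁]` measuring the degree in `s` and `u`. -/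
def suWeight : Fin 2 ⊕ Fin 2 → ℕ := Sum.elim 1 0

/-- The class of `x_i` in `P / I₂(MX)`. -/
def xbar (i : Fin (a + 1)) : KPoly F a ⧸ I2MX F a := Ideal.Quotient.mk _ (xv F a i)

/-- The class in `P / I₂(MX)` of a preimage under `param` of the monomial with exponents `d`, and
`0` if there is none. -/
def retractionMonomial (d : Fin 2 ⊕ Fin 2 →₀ ℕ) : KPoly F a ⧸ I2MX F a :=
  if a ∣ Finsupp.weight suWeight d then
    greedyProduct (xbar F a) (Finsupp.weight suWeight d / a) (d (.inl 1)) *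
      ∏ j, Ideal.Quotient.mk _ (yv F a j) ^ d (.inr j)
  else 0

/-- The retraction of the map `P / I₂(MX) → F[s, u, y₀, y₁]` induced by `param`. It is bundled as an
`F`-linear map; its `P`-linearity is `retraction_mul_param`. -/
def retraction : ParamPoly F →ₗ[F] KPoly F a ⧸ I2MX F a :=
  (basisMonomials (Fin 2 ⊕ Fin 2) F).constr F (retractionMonomial F a)

variable {F a}

/-- The exponent vector of the monomial `s^(a-i) u^i`. -/
def xExponent (i : Fin (a + 1)) : Fin 2 ⊕ Fin 2 →₀ ℕ :=
  Finsupp.single (Sum.inl 0) (a - (i : ℕ)) + Finsupp.single (Sum.inl 1) (i : ℕ)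

@[simp]
theorem param_xv (i : Fin (a + 1)) :
    param F a (xv F a i) = X (.inl 0) ^ (a - (i : ℕ)) * X (.inl 1) ^ (i : ℕ) := by
  simp [param, xv]

@[simp]
theorem param_yv (j : Fin 2) : param F a (yv F a j) = X (.inr j) := by
  simp [param, yv]

theorem hasVanishingMinors_xbar : HasVanishingMinors (xbar F a) := fun i j => by
  simp only [xbar, ← map_mul, Ideal.Quotient.eq]
  exact Ideal.subset_span ⟨i, j, rfl⟩

theorem retraction_monomial_one (d : Fin 2 ⊕ Fin 2 →₀ ℕ) :
    retraction F a (monomial d 1) = retractionMonomial F a d := by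
  have hbasis : monomial d 1 = basisMonomials (Fin 2 ⊕ Fin 2) F d := by simp
  rw [hbasis, retraction, Module.Basis.constr_basis]

theorem retractionMonomial_add_xExponent (ha : 0 < a) (d : Fin 2 ⊕ Fin 2 →₀ ℕ) (i : Fin (a + 1)) :
    retractionMonomial F a (d + xExponent i) = retractionMonomial F a d * xbar F a i := by
  have hweight : Finsupp.weight suWeight (d + xExponent i) = Finsupp.weight suWeight d + a := by
    simp only [xExponent, map_add, Finsupp.weight_single, suWeight, Sum.elim_inl, Pi.one_apply,
      smul_eq_mul, mul_one, Nat.sub_add_cancel i.is_le]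
  rw [retractionMonomial, retractionMonomial, hweight]
  simp only [Nat.dvd_add_self_right, Nat.add_div_right _ ha]
  split_ifs with hd
  · have hle : d (.inl 1) ≤ a * (Finsupp.weight suWeight d / a) := by
      rw [Nat.mul_div_cancel' hd]
      exact Finsupp.le_weight suWeight (by simp [suWeight]) d
    rw [mul_right_comm, hasVanishingMinors_xbar.greedyProduct_mul hle]
    simp [xExponent]
  · rw [zero_mul]

theorem retractionMonomial_add_single_inr (d : Fin 2 ⊕ Fin 2 →₀ ℕ) (j : Fin 2) :
    retractionMonomial F a (d + Finsupp.single (Sum.inr j) 1) =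
      retractionMonomial F a d * Ideal.Quotient.mk _ (yv F a j) := by
  have hprod : ∏ k, Ideal.Quotient.mk (I2MX F a) (yv F a k) ^
        (d + Finsupp.single (Sum.inr j) 1 : Fin 2 ⊕ Fin 2 →₀ ℕ) (Sum.inr k) =
      (∏ k, Ideal.Quotient.mk (I2MX F a) (yv F a k) ^ d (Sum.inr k)) *
        Ideal.Quotient.mk _ (yv F a j) := by
    simp only [Finsupp.add_apply, Finsupp.single_apply, Sum.inr.injEq, pow_add, pow_ite, pow_one,
      pow_zero, Finset.prod_mul_distrib, Finset.prod_ite_eq, Finset.mem_univ, if_true]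
  rw [retractionMonomial, retractionMonomial, hprod]
  simp [Finsupp.weight_single, suWeight, mul_assoc]

theorem retraction_mul_param (ha : 0 < a) (g : ParamPoly F) (f : KPoly F a) :
    retraction F a (g * param F a f) = retraction F a g * Ideal.Quotient.mk _ f := by
  refine map_mul_algHom_of_forall_X (param F a) (Ideal.Quotient.mkₐ F (I2MX F a))
    (retraction F a) (fun n g => ?_) g f
  rcases n with i | j
  · have hparam : param F a (X (.inl i)) = monomial (xExponent i) 1 := by
      simp [param, xExponent, X_pow_eq_monomial, monomial_mul]
    rw [hparam]
    refine map_mul_monomial_one_of_forall_add _ _ _ (fun d => ?_) g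
    rw [retraction_monomial_one, retraction_monomial_one, retractionMonomial_add_xExponent ha]
    rfl
  · have hparam : param F a (X (.inr j)) = monomial (Finsupp.single (Sum.inr j) 1) 1 :=
      param_yv j
    rw [hparam]
    refine map_mul_monomial_one_of_forall_add _ _ _ (fun d => ?_) g
    rw [retraction_monomial_one, retraction_monomial_one, retractionMonomial_add_single_inr]
    rfl

theorem retraction_param (ha : 0 < a) (f : KPoly F a) :
    retraction F a (param F a f) = Ideal.Quotient.mk _ f := by
  have hone : retraction F a 1 = 1 := by
    rw [← MvPolynomial.C_1, C_apply, retraction_monomial_one]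
    simp [retractionMonomial, greedyProduct]
  simpa [hone] using retraction_mul_param ha 1 f

theorem retraction_eq_zero_of_isWeightedHomogeneous {p : ParamPoly F} {n : ℕ}
    (hp : IsWeightedHomogeneous suWeight p n) (hn : ¬ a ∣ n) : retraction F a p = 0 := by
  rw [← support_sum_monomial_coeff p, map_sum]
  refine Finset.sum_eq_zero fun d hd => ?_
  rw [← mul_one (coeff d p), ← smul_eq_mul, ← smul_monomial, map_smul, retraction_monomial_one,
    retractionMonomial, if_neg (hp (mem_support_iff.1 hd) ▸ hn), smul_zero]

end Retraction

section RegularModulo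

theorem dvd_of_dvd_mul_of_isLeftRegular {M : Type*} [CommSemigroup M] {p q g : M}
    (hp : IsLeftRegular p) (hpq : ∀ h, p ∣ q * h → p ∣ h) (hg : q ∣ p * g) : q ∣ g := by
  obtain ⟨h, hh⟩ := hg
  obtain ⟨h', rfl⟩ := hpq h ⟨g, hh.symm⟩
  exact ⟨h', hp (hh.trans (mul_left_comm q p h'))⟩

theorem X_dvd_of_X_dvd_X_mul {σ R : Type*} [CommSemiring R] {i j : σ} (hij : i ≠ j)
    {h : MvPolynomial σ R} (hdvd : X i ∣ X j * h) : X i ∣ h := by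
  rw [X_dvd_iff_modMonomial_eq_zero] at hdvd ⊢
  ext d
  by_cases hd : Finsupp.single i 1 ≤ d
  · rw [coeff_modMonomial_of_le _ hd, coeff_zero]
  · have hd' : ¬ Finsupp.single i 1 ≤ Finsupp.single j 1 + d := by
      simpa [Finsupp.single_le_iff, hij.symm] using hd
    rw [coeff_modMonomial_of_not_le _ hd, ← coeff_X_mul, ← coeff_modMonomial_of_not_le _ hd',
      hdvd, coeff_zero, coeff_zero]

end RegularModulo

section ScrollForm

/-- The form `t s y₁ - u y₀`, the equation in `F[s, u, y₀, y₁]` of the minors of `m_ℓ`. -/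
def scrollForm (t : F) : ParamPoly F :=
  C t * (X (.inl 0) * X (.inr 1)) - X (.inl 1) * X (.inr 0)

variable {F a}

theorem isWeightedHomogeneous_scrollForm (t : F) :
    IsWeightedHomogeneous suWeight (scrollForm F t) 1 :=
  (((isWeightedHomogeneous_X F suWeight (.inl 0)).mul
    (isWeightedHomogeneous_X F suWeight (.inr 1))).C_mul t).sub
    ((isWeightedHomogeneous_X F suWeight (.inl 1)).mul
      (isWeightedHomogeneous_X F suWeight (.inr 0)))

theorem X_dvd_of_X_dvd_scrollForm_mul (t : F) {v : Fin 2 ⊕ Fin 2} (hv : v = .inl 0 ∨ v = .inr 1)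
    {h : ParamPoly F} (hdvd : X v ∣ scrollForm F t * h) : X v ∣ h := by
  have hleft : X v ∣ C t * (X (.inl 0) * X (.inr 1)) * h := by
    rcases hv with rfl | rfl
    · exact ⟨C t * X (.inr 1) * h, by ring⟩
    · exact ⟨C t * X (.inl 0) * h, by ring⟩
  have hright : X v ∣ X (.inl 1) * (X (.inr 0) * h) := by
    rw [scrollForm, sub_mul] at hdvd
    rw [← mul_assoc]
    exact (dvd_sub_right hleft).1 hdvd
  have hu : v ≠ .inl 1 := by rcases hv with rfl | rfl <;> simp
  have hy : v ≠ .inr 0 := by rcases hv with rfl | rfl <;> simp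
  exact X_dvd_of_X_dvd_X_mul hy (X_dvd_of_X_dvd_X_mul hu hright)

theorem C_dvd_of_C_dvd_scrollForm_mul (t : F) {r : F} {h : ParamPoly F}
    (hdvd : C r ∣ scrollForm F t * h) : C r ∣ h := by
  rw [C_dvd_iff_dvd_coeff] at hdvd ⊢
  intro d
  induction hn : d (Sum.inl 0) using Nat.strong_induction_on generalizing d with
  | _ n ih =>
    set e : Fin 2 ⊕ Fin 2 →₀ ℕ := Finsupp.single (Sum.inl 1) 1 + (Finsupp.single (Sum.inr 0) 1 + d)
      with he
    have hcoeff : coeff e (scrollForm F t * h) =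
        t * coeff e (X (.inl 0) * (X (.inr 1) * h)) - coeff d h := by
      rw [scrollForm, sub_mul, mul_assoc, mul_assoc, mul_assoc, coeff_sub, coeff_C_mul, he,
        coeff_X_mul, coeff_X_mul]
    have hleft : r ∣ coeff e (X (.inl 0) * (X (.inr 1) * h)) := by
      rw [coeff_X_mul', coeff_X_mul']
      split_ifs with hs hy
      · refine ih _ ?_ _ rfl
        subst hn
        have hpos : d (Sum.inl 0) ≠ 0 := by simpa [he] using hs
        simpa [he] using Nat.pos_of_ne_zero hpos
      · exact dvd_zero r
      · exact dvd_zero r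
    exact (dvd_sub_right (hleft.mul_left t)).1 (hcoeff ▸ hdvd e)

theorem scrollForm_mul_dvd {t₁ t₂ : F} (ht : IsRegular (t₁ - t₂)) {f : ParamPoly F}
    (h₁ : scrollForm F t₁ ∣ f) (h₂ : scrollForm F t₂ ∣ f) :
    scrollForm F t₁ * scrollForm F t₂ ∣ f := by
  obtain ⟨g, rfl⟩ := h₁
  have hdvd : scrollForm F t₂ ∣ C (t₁ - t₂) * (X (.inl 0) * (X (.inr 1) * g)) := by
    have hdiff : C (t₁ - t₂) * (X (.inl 0) * (X (.inr 1) * g)) =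
        scrollForm F t₁ * g - scrollForm F t₂ * g := by
      rw [scrollForm, scrollForm, C_sub]
      ring
    exact hdiff ▸ dvd_sub h₂ (dvd_mul_right _ _)
  have hC : IsLeftRegular (C (t₁ - t₂) : ParamPoly F) := ht.monomial.left
  refine mul_dvd_mul_left _ ?_
  exact dvd_of_dvd_mul_of_isLeftRegular isRegular_X.left
    (fun _ => X_dvd_of_X_dvd_scrollForm_mul t₂ (.inr rfl)) <|
    dvd_of_dvd_mul_of_isLeftRegular isRegular_X.left
    (fun _ => X_dvd_of_X_dvd_scrollForm_mul t₂ (.inl rfl)) <|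
    dvd_of_dvd_mul_of_isLeftRegular hC (fun _ => C_dvd_of_C_dvd_scrollForm_mul t₂) hdvd

theorem exists_param_mrow_inl (t : F) (c : Fin a) :
    ∃ m, param F a (mrow1 F a (.inl c)) = X (.inl 0) * m ∧
      param F a (mrow2 F a t (.inl c)) = X (.inl 1) * m := by
  refine ⟨X (.inl 0) ^ (a - 1 - (c : ℕ)) * X (.inl 1) ^ (c : ℕ), ?_, ?_⟩
  · have hexp : a - (c : ℕ) = a - 1 - c + 1 := by omega
    simp only [mrow1, param_xv, Fin.val_castSucc, hexp]
    ring
  · have hexp : a - ((c : ℕ) + 1) = a - 1 - c := by omega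
    simp only [mrow2, param_xv, Fin.val_succ, hexp]
    ring

theorem scrollForm_dvd_param {t : F} {f : KPoly F a} (hf : f ∈ I2M F a t) :
    scrollForm F t ∣ param F a f := by
  suffices h : I2M F a t ≤ (Ideal.span {scrollForm F t}).comap (param F a) from
    Ideal.mem_span_singleton.1 (h hf)
  rw [I2M, Ideal.span_le]
  rintro _ ⟨c, c', rfl⟩
  rw [SetLike.mem_coe, Ideal.mem_comap, Ideal.mem_span_singleton, map_sub, map_mul, map_mul]
  have hrow1 : param F a (mrow1 F a (.inr 0)) = X (.inr 0) := param_yv 0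
  have hrow2 : param F a (mrow2 F a t (.inr 0)) = C t * X (.inr 1) := by
    simp [mrow2, algebraMap_eq]
  rcases c with c | c <;> rcases c' with c' | c'
  · obtain ⟨m, h₁, h₂⟩ := exists_param_mrow_inl t c
    obtain ⟨m', h₁', h₂'⟩ := exists_param_mrow_inl t c'
    rw [h₁, h₂, h₁', h₂']
    exact ⟨0, by ring⟩
  · obtain ⟨m, h₁, h₂⟩ := exists_param_mrow_inl t c
    rw [h₁, h₂, Subsingleton.elim c' 0, hrow1, hrow2]
    exact ⟨m, by rw [scrollForm]; ring⟩
  · obtain ⟨m, h₁, h₂⟩ := exists_param_mrow_inl t c'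
    rw [h₁, h₂, Subsingleton.elim c 0, hrow1, hrow2]
    exact ⟨-m, by rw [scrollForm]; ring⟩
  · rw [Subsingleton.elim c c', sub_self]
    exact dvd_zero _

end ScrollForm

section CubicForms

variable {F a}

theorem param_cubicForm (t₁ t₂ : F) {i : ℕ} (hi : i + 2 ≤ a) :
    param F a (xv F a ⟨i + 2, by omega⟩ * yv F a 0 ^ 2
      - C (t₁ + t₂) * (xv F a ⟨i + 1, by omega⟩ * (yv F a 0 * yv F a 1))
      + C (t₁ * t₂) * (xv F a ⟨i, by omega⟩ * yv F a 1 ^ 2)) =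
    X (.inl 0) ^ (a - 2 - i) * X (.inl 1) ^ i * (scrollForm F t₁ * scrollForm F t₂) := by
  obtain ⟨b, rfl⟩ := Nat.exists_eq_add_of_le hi
  have h₀ : i + 2 + b - i = b + 2 := by omega
  have h₁ : i + 2 + b - (i + 1) = b + 1 := by omega
  have h₂ : i + 2 + b - 2 - i = b := by omega
  simp only [map_add, map_sub, map_mul, map_pow, param_xv, param_yv, algHom_C, algebraMap_eq,
    add_tsub_cancel_left, h₀, h₁, h₂, scrollForm]
  ring

theorem exists_X_pow_mul_X_pow_dvd_monomial {d : Fin 2 ⊕ Fin 2 →₀ ℕ}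
    (hd : a ≤ Finsupp.weight suWeight d + 2) (ha : 2 ≤ a) (c : F) :
    ∃ i, i + 2 ≤ a ∧
      (X (.inl 0) ^ (a - 2 - i) * X (.inl 1) ^ i : ParamPoly F) ∣ monomial d c := by
  have hweight : Finsupp.weight suWeight d = d (.inl 0) + d (.inl 1) := by
    simp [Finsupp.weight_apply, Finsupp.sum_fintype, suWeight]
  refine ⟨min (a - 2) (d (.inl 1)), by omega, ?_⟩
  rw [X_pow_eq_monomial, X_pow_eq_monomial, monomial_mul, mul_one, monomial_dvd_monomial]
  refine ⟨.inr fun v => ?_, one_dvd c⟩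
  simp only [Finsupp.add_apply, Finsupp.single_apply]
  grind

theorem retraction_mul_scrollForm_mem (ha : 2 ≤ a) (t₁ t₂ : F) (p : ParamPoly F) :
    retraction F a (p * (scrollForm F t₁ * scrollForm F t₂)) ∈
      (Je F a (t₁ + t₂) (t₁ * t₂)).map (Ideal.Quotient.mk (I2MX F a)) := by
  induction p using MvPolynomial.induction_on' with
  | add p q hp hq => rw [add_mul, map_add]; exact Ideal.add_mem _ hp hq
  | monomial d c =>
    by_cases hd : a ≤ Finsupp.weight suWeight d + 2
    · obtain ⟨i, hi, g, hg⟩ := exists_X_pow_mul_X_pow_dvd_monomial hd ha c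
      rw [hg, mul_comm _ g, mul_assoc, ← param_cubicForm t₁ t₂ hi,
        retraction_mul_param (by omega)]
      exact Ideal.mul_mem_left _ _ (Ideal.mem_map_of_mem _ (Ideal.subset_span ⟨i, hi, rfl⟩))
    · have hhom : IsWeightedHomogeneous suWeight
          (monomial d c * (scrollForm F t₁ * scrollForm F t₂))
          (Finsupp.weight suWeight d + 2) :=
        (isWeightedHomogeneous_monomial _ d c rfl).mul
          ((isWeightedHomogeneous_scrollForm t₁).mul (isWeightedHomogeneous_scrollForm t₂))
      have hdvd : ¬ a ∣ Finsupp.weight suWeight d + 2 :=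
        Nat.not_dvd_of_pos_of_lt (by omega) (not_le.1 hd)
      rw [retraction_eq_zero_of_isWeightedHomogeneous hhom hdvd]
      exact zero_mem _

theorem I2MX_le_I2M (t : F) : I2MX F a ≤ I2M F a t := by
  rw [I2MX, Ideal.span_le]
  rintro _ ⟨c, c', rfl⟩
  exact Ideal.subset_span ⟨.inl c, .inl c', rfl⟩

theorem Je_le_I2M (t₁ t₂ : F) : Je F a (t₁ + t₂) (t₁ * t₂) ≤ I2M F a t₁ := by
  rw [Je, Ideal.span_le]
  rintro _ ⟨i, hi, rfl⟩
  have hminor (c : Fin a) :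
      xv F a c.castSucc * (C t₁ * yv F a 1) - yv F a 0 * xv F a c.succ ∈ I2M F a t₁ :=
    Ideal.subset_span ⟨.inl c, .inr 0, rfl⟩
  rw [SetLike.mem_coe]
  convert Ideal.add_mem _
    (Ideal.mul_mem_left _ (-yv F a 0) (hminor ⟨i + 1, by omega⟩))
    (Ideal.mul_mem_left _ (C t₂ * yv F a 1) (hminor ⟨i, by omega⟩)) using 1
  simp only [Fin.castSucc_mk, Fin.succ_mk, C_add, C_mul]
  ring

end CubicForms

theorem stmt1_general (F : Type*) [CommRing F] (a : ℕ) (ha : 2 ≤ a) (t₁ t₂ : F)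
    (ht : IsRegular (t₁ - t₂)) :
    I2MX F a + Je F a (t₁ + t₂) (t₁ * t₂) = I2M F a t₁ ⊓ I2M F a t₂ := by
  have hJe : Je F a (t₁ + t₂) (t₁ * t₂) ≤ I2M F a t₂ := by
    rw [add_comm t₁, mul_comm t₁]
    exact Je_le_I2M t₂ t₁
  apply le_antisymm
  · exact sup_le (le_inf (I2MX_le_I2M t₁) (I2MX_le_I2M t₂)) (le_inf (Je_le_I2M t₁ t₂) hJe)
  · rintro f ⟨h₁, h₂⟩
    obtain ⟨k, hk⟩ := scrollForm_mul_dvd ht (scrollForm_dvd_param h₁) (scrollForm_dvd_param h₂)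
    have hmem := retraction_mul_scrollForm_mem ha t₁ t₂ k
    rw [mul_comm k, ← hk, retraction_param (by omega), Ideal.mem_quotient_iff_mem_sup] at hmem
    rwa [Submodule.add_eq_sup, sup_comm]

/-- For a field `F`, an integer `a ≥ 2`, `b = 1`, and distinct
nonzero `t₁, t₂ ∈ F`, with `e₁ = t₁ + t₂`, `e₂ = t₁t₂`, one has
`I₂(MX) + J_e = I₂(m₁) ∩ I₂(m₂)` in `F[x₀,…,x_a, y₀, y₁]`. -/
theorem stmt1 (F : Type*) [Field F] (a : ℕ) (ha : 2 ≤ a)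
    (t1 t2 : F) (ht1 : t1 ≠ 0) (ht2 : t2 ≠ 0) (hne : t1 ≠ t2) :
    I2MX F a + Je F a (t1 + t2) (t1 * t2) = I2M F a t1 ⊓ I2M F a t2 := by
  exact stmt1_general F a ha t1 t2 (IsRegular.of_ne_zero (sub_ne_zero.2 hne))

end
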